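/- arXiv:1209.6613 — 2 statements merged into one kernel-verified Lean document; each statement's English description precedes it below -/
import Mathlib

section
/- Suppose Re μ > 0. Then Z_μ is a first integral of L: Z_μ ∈ C^∞(ℝ²∖{0}; ℂ), A·∂Z_μ/∂x + B·∂Z_μ/∂y = 0 at every point of ℝ²∖{0}, dZ_μ vanishes nowhere on ℝ²∖{0}, and Z_μ maps ℝ² onto ℂ. If, in addition, L satisfies condition (P) in ℝ²∖{0}, then Z_μ : ℝ² → ℂ is a homeomorphism. -/
open Real Complex Set

/-!
In the logarithmic coordinate `w = log r + iθ` the function `Z` reads `Z ∘ exp = exp ∘ H` with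
`H w = Re w / μ + i (Im w + φ (Im w))`. Since `exp` is a local diffeomorphism onto the punctured
plane, the regularity of `Z`, the equation `L Z = 0` and `dZ ≠ 0` are read off from the two partial
derivatives of `H`, in the radial and in the angular direction.

Since `H (w + 2πi) = H w + 2πi`, `Z` is injective or surjective as soon as `H` is, and up to the
factor `μ` the map `H` is a shear over `g θ = Re (μ (θ + φ θ))`. As `φ` is bounded and `Re μ > 0`,
`g` is onto `ℝ`; its derivative is `Re (q / p)`, so under condition (P) it is also injective.
Finally `Re H w = Re (1 / μ) Re w + O(1)`, which makes `Z` continuous at the origin and proper.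
-/

open Bornology Filter Function Topology

section RealLine

theorem injective_of_hasDerivAt_of_interior_eq_empty {g g' : ℝ → ℝ}
    (hg : ∀ x, HasDerivAt g (g' x) x) (hsign : (∀ x, 0 ≤ g' x) ∨ ∀ x, g' x ≤ 0)
    (hint : interior {x | g' x = 0} = ∅) : Injective g := by
  have hfiber (c : ℝ) : (g ⁻¹' {c}).OrdConnected := hsign.elim
    (fun h => ordConnected_singleton.preimage_mono (monotone_of_hasDerivAt_nonneg hg h))
    (fun h => ordConnected_singleton.preimage_anti (antitone_of_hasDerivAt_nonpos hg h))
  refine .of_lt_imp_ne fun x y hxy heq => ?_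
  have hconst : ∀ t ∈ Ioo x y, g t = g y := fun t ht =>
    (hfiber (g y)).out heq rfl (Ioo_subset_Icc_self ht)
  have hzero : Ioo x y ⊆ interior {x | g' x = 0} :=
    interior_maximal (fun t ht => (hg t).unique ((hasDerivAt_const t (g y)).congr_of_eventuallyEq
      (eventually_of_mem (isOpen_Ioo.mem_nhds ht) hconst))) isOpen_Ioo
  exact (nonempty_Ioo.2 hxy).ne_empty (subset_empty_iff.1 (hint ▸ hzero))

theorem surjective_const_mul_add_of_abs_le {c C : ℝ} (hc : 0 < c) {f : ℝ → ℝ} (hf : Continuous f)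
    (hC : ∀ x, |f x| ≤ C) : Surjective fun x => c * x + f x :=
  Continuous.surjective (by fun_prop)
    (tendsto_atTop_add_right_of_le _ (-C) (tendsto_id.const_mul_atTop hc)
      fun x => (abs_le.1 (hC x)).1)
    (tendsto_atBot_add_right_of_ge _ C (tendsto_id.const_mul_atBot hc)
      fun x => (abs_le.1 (hC x)).2)

theorem exists_norm_le_of_periodic {E : Type*} [SeminormedAddCommGroup E] {f : ℝ → E} {c : ℝ}
    (hper : Periodic f c) (hc : c ≠ 0) (hf : Continuous f) : ∃ C, ∀ x, ‖f x‖ ≤ C := by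
  simpa using (hper.compact_of_continuous hc hf).isBounded.exists_norm_le

theorem contDiff_succ_of_hasDerivAt {E : Type*} [NormedAddCommGroup E] [NormedSpace ℝ E]
    {f f' : ℝ → E} {n : ℕ∞} (hf : ∀ x, HasDerivAt f (f' x) x) (hf' : ContDiff ℝ n f') :
    ContDiff ℝ (n + 1) f := by
  refine contDiff_succ_iff_deriv.2 ⟨fun x => (hf x).differentiableAt, by simp, ?_⟩
  rwa [funext fun x => (hf x).deriv]

end RealLine

section Exponential

theorem contDiffAt_of_comp_exp {E : Type*} [NormedAddCommGroup E] [NormedSpace ℝ E] {F : ℂ → E}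
    {n : WithTop ℕ∞} {w : ℂ} (h : ContDiffAt ℝ n (F ∘ cexp) w) : ContDiffAt ℝ n F (cexp w) := by
  -- The branch of the logarithm near `exp w` which takes the value `w` there.
  set branch : ℂ → ℂ := fun z => w + Complex.log (z / cexp w)
  have hbranch_self : branch (cexp w) = w := by simp [branch]
  have hbranch : ContDiffAt ℝ n branch (cexp w) := by
    have hlog : ContDiffAt ℝ n Complex.log (cexp w / cexp w) :=
      (Complex.contDiffAt_log (by simp)).restrict_scalars ℝ
    have hdiv : ContDiffAt ℝ n (fun z => z / cexp w) (cexp w) := contDiffAt_id.div_const _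
    exact contDiffAt_const.add (ContDiffAt.comp (g := Complex.log) (cexp w) hlog hdiv)
  have hexp_branch : F =ᶠ[𝓝 (cexp w)] (F ∘ cexp) ∘ branch := by
    filter_upwards [isOpen_ne.mem_nhds (Complex.exp_ne_zero w)] with z hz
    simp only [branch, comp_apply, Complex.exp_add,
      Complex.exp_log (div_ne_zero hz (Complex.exp_ne_zero w)),
      mul_div_cancel₀ _ (Complex.exp_ne_zero w)]
  rw [← hbranch_self] at h
  exact (h.comp (cexp w) hbranch).congr_of_eventuallyEq hexp_branch

variable {F H : ℂ → ℂ}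

theorem contDiffAt_of_semiconj_exp (hFH : Semiconj cexp H F) {n : WithTop ℕ∞} {w : ℂ}
    (hH : ContDiffAt ℝ n H w) : ContDiffAt ℝ n F (cexp w) :=
  contDiffAt_of_comp_exp (hFH.comp_eq ▸ hH.cexp)

theorem fderiv_apply_exp_mul_of_semiconj_exp (hFH : Semiconj cexp H F) {w : ℂ}
    (hH : ContDiffAt ℝ 1 H w) (v : ℂ) :
    fderiv ℝ F (cexp w) (cexp w * v) = F (cexp w) * fderiv ℝ H w v := by
  have hF := (contDiffAt_of_semiconj_exp hFH hH).differentiableAt one_ne_zero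
  have hleft := hF.hasFDerivAt.comp w (hasFDerivAt_id w).cexp
  have hright := (hH.differentiableAt one_ne_zero).hasFDerivAt.cexp
  rw [show (fun w => cexp (H w)) = F ∘ cexp from hFH.comp_eq, hFH w] at hright
  simpa using congr($(hleft.unique hright) v)

theorem surjective_of_semiconj_exp (hFH : Semiconj cexp H F) (hF0 : F 0 = 0)
    (hH : Surjective H) : Surjective F := by
  intro z
  rcases eq_or_ne z 0 with rfl | hz
  · exact ⟨0, hF0⟩
  obtain ⟨w, hw⟩ := hH (Complex.log z)
  exact ⟨cexp w, by rw [← hFH w, hw, Complex.exp_log hz]⟩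

theorem injective_of_semiconj_exp (hFH : Semiconj cexp H F) (hF0 : F 0 = 0)
    (hper : Periodic (fun w => H w - w) (2 * π * I)) (hH : Injective H) : Injective F := by
  have hF_exp (w : ℂ) : F (cexp w) ≠ 0 := hFH w ▸ Complex.exp_ne_zero _
  intro z z' h
  by_cases hz : z = 0 <;> by_cases hz' : z' = 0
  · rw [hz, hz']
  · exact absurd (by rw [Complex.exp_log hz', ← h, hz, hF0]) (hF_exp (Complex.log z'))
  · exact absurd (by rw [Complex.exp_log hz, h, hz', hF0]) (hF_exp (Complex.log z))
  rw [← Complex.exp_log hz, ← Complex.exp_log hz'] at h ⊢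
  rw [← hFH, ← hFH, Complex.exp_eq_exp_iff_exists_int] at h
  obtain ⟨k, hk⟩ := h
  have hshift : H (Complex.log z) = H (Complex.log z' + k * (2 * π * I)) := by
    linear_combination hk - hper.int_mul k (Complex.log z')
  rw [hH hshift, Complex.exp_periodic.int_mul k]

theorem continuous_of_semiconj_exp (hFH : Semiconj cexp H F) (hF0 : F 0 = 0) (hH : Continuous H)
    (hbot : Tendsto (fun w => (H w).re) (comap re atBot) atBot) : Continuous F := by
  refine continuous_iff_continuousAt.2 fun z => ?_
  rcases eq_or_ne z 0 with rfl | hz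
  · rw [continuousAt_iff_punctured_nhds, hF0, ← map_exp_comap_re_atBot, tendsto_map'_iff,
      ← hFH.comp_eq]
    exact tendsto_exp_nhds_zero_iff.2 hbot
  · rw [← Complex.exp_log hz]
    exact (contDiffAt_of_semiconj_exp hFH (contDiff_zero.2 hH).contDiffAt).continuousAt

theorem isHomeomorph_of_semiconj_exp (hFH : Semiconj cexp H F) (hF0 : F 0 = 0)
    (hH : Continuous H) (hbij : Bijective H) (hper : Periodic (fun w => H w - w) (2 * π * I))
    (hbot : Tendsto (fun w => (H w).re) (comap re atBot) atBot)
    (htop : Tendsto (fun w => (H w).re) (comap re atTop) atTop) : IsHomeomorph F := by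
  have hcont := continuous_of_semiconj_exp hFH hF0 hH hbot
  have hproper : Tendsto F (cobounded ℂ) (cobounded ℂ) := by
    rw [← map_exp_comap_re_atTop, tendsto_map'_iff, ← hFH.comp_eq, map_exp_comap_re_atTop]
    exact tendsto_exp_comap_re_atTop.comp (tendsto_comap_iff.2 htop)
  rw [Metric.cobounded_eq_cocompact] at hproper
  exact isHomeomorph_iff_continuous_isClosedMap_bijective.2
    ⟨hcont, (isProperMap_iff_tendsto_cocompact.2 ⟨hcont, hproper⟩).isClosedMap,
      injective_of_semiconj_exp hFH hF0 hper hbij.1, surjective_of_semiconj_exp hFH hF0 hbij.2⟩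

/-- The polar form of the vector field `a ∂ₓ + b ∂ᵧ` at the point `exp w`. -/
theorem exp_re_mul_apply_one_add_apply_I (D : ℂ →L[ℝ] ℂ) (a b w : ℂ) :
    rexp w.re * (a * D 1 + b * D I) =
      (a * Real.cos w.im + b * Real.sin w.im) * D (cexp w) +
        (b * Real.cos w.im - a * Real.sin w.im) * D (cexp w * I) := by
  have hD (z : ℂ) : D z = z.re * D 1 + z.im * D I := by
    conv_lhs => rw [← re_add_im z, ← mul_one (z.re : ℂ), ← real_smul, ← real_smul, map_add,
      map_smul, map_smul, real_smul, real_smul]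
  rw [hD (cexp w), hD (cexp w * I), mul_I_re, mul_I_im, Complex.exp_re, Complex.exp_im]
  push_cast
  linear_combination (-cexp w.re * (a * D 1 + b * D I)) * Complex.cos_sq_add_sin_sq w.im

end Exponential

/-- The expression in the logarithmic coordinate `w = log r + iθ`, both at the source and at the
target, of the function `exp (log r / mu) * exp (i (θ + phi θ))`. -/
noncomputable def logPolarLift (mu : ℂ) (phi : ℝ → ℂ) (w : ℂ) : ℂ :=
  w.re / mu + I * (w.im + phi w.im)

namespace logPolarLift

variable {mu : ℂ} {phi : ℝ → ℂ}

protected theorem contDiff {n : WithTop ℕ∞} (hphi : ContDiff ℝ n phi) :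
    ContDiff ℝ n (logPolarLift mu phi) :=
  ((ofRealCLM.contDiff.comp reCLM.contDiff).div_const mu).add
    (contDiff_const.mul ((ofRealCLM.contDiff.comp imCLM.contDiff).add (hphi.comp imCLM.contDiff)))

theorem fderiv_apply {w d : ℂ} (hphi : HasDerivAt phi d w.im) (v : ℂ) :
    fderiv ℝ (logPolarLift mu phi) w v = v.re / mu + I * (1 + d) * v.im := by
  have hre := (ofRealCLM.comp reCLM).hasFDerivAt (x := w)
  have him := (ofRealCLM.comp imCLM).hasFDerivAt (x := w)
  have hphi_im := hphi.hasFDerivAt.comp w imCLM.hasFDerivAt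
  have h := (hre.mul_const mu⁻¹).add ((him.add hphi_im).const_mul I)
  calc fderiv ℝ (logPolarLift mu phi) w v = _ := congr($(h.fderiv) v)
    _ = v.re / mu + I * (1 + d) * v.im := by
      simp only [smul_add, ContinuousLinearMap.comp_apply, reCLM_apply, ofRealCLM_apply,
        Pi.add_apply, imCLM_apply, comp_apply, add_apply, smul_apply, smul_eq_mul,
        ContinuousLinearMap.toSpanSingleton_apply, real_smul]
      ring

theorem periodic_sub_id (hper : Periodic phi (2 * π)) :
    Periodic (fun w => logPolarLift mu phi w - w) (2 * π * I) := by
  intro w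
  have hre : (w + 2 * π * I).re = w.re := by simp
  have him : (w + 2 * π * I).im = w.im + 2 * π := by simp
  simp only [logPolarLift, hre, him, hper w.im]
  push_cast
  ring

theorem mul_eq_re_add (hmu : mu ≠ 0) (w : ℂ) :
    mu * logPolarLift mu phi w = w.re + I * (mu * (w.im + phi w.im)) := by
  rw [logPolarLift]
  field_simp

protected theorem surjective (hmu : mu ≠ 0)
    (hg : Surjective fun θ : ℝ => (mu * (θ + phi θ)).re) : Surjective (logPolarLift mu phi) := by
  intro ζ
  obtain ⟨θ, hθ⟩ := hg (mu * ζ).im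
  refine ⟨⟨(mu * ζ).re + (mu * (θ + phi θ)).im, θ⟩, mul_left_cancel₀ hmu ?_⟩
  rw [mul_eq_re_add hmu]
  apply Complex.ext
  · simp only [add_re, ofReal_re, I_mul_re]; ring
  · simpa only [add_im, ofReal_im, I_mul_im, zero_add] using hθ

protected theorem injective (hmu : mu ≠ 0)
    (hg : Injective fun θ : ℝ => (mu * (θ + phi θ)).re) : Injective (logPolarLift mu phi) := by
  intro w w' h
  replace h := congrArg (mu * ·) h
  simp only [mul_eq_re_add hmu] at h
  have him : w.im = w'.im :=
    hg (by simpa only [add_im, ofReal_im, I_mul_im, zero_add] using congrArg im h)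
  rw [him, add_left_inj, ofReal_inj] at h
  exact Complex.ext h him

theorem re_eq (w : ℂ) :
    (logPolarLift mu phi w).re = (mu⁻¹).re * w.re + -(phi w.im).im := by
  simp [logPolarLift, div_eq_mul_inv, mul_comm]

theorem tendsto_re_atTop (hmu : 0 < (mu⁻¹).re) {C : ℝ} (hC : ∀ θ, ‖phi θ‖ ≤ C) :
    Tendsto (fun w => (logPolarLift mu phi w).re) (comap re atTop) atTop := by
  simp only [re_eq]
  exact tendsto_atTop_add_right_of_le _ (-C) (tendsto_comap.const_mul_atTop hmu)
    fun w => neg_le_neg (((le_abs_self _).trans (abs_im_le_norm _)).trans (hC _))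

theorem tendsto_re_atBot (hmu : 0 < (mu⁻¹).re) {C : ℝ} (hC : ∀ θ, ‖phi θ‖ ≤ C) :
    Tendsto (fun w => (logPolarLift mu phi w).re) (comap re atBot) atBot := by
  simp only [re_eq]
  exact tendsto_atBot_add_right_of_ge _ C (tendsto_comap.const_mul_atBot hmu)
    fun w => ((neg_le_abs _).trans (abs_im_le_norm _)).trans (hC _)

end logPolarLift

section FirstIntegral

theorem contDiff_comp_circle {E : Type*} [NormedAddCommGroup E] [NormedSpace ℝ E]
    {A : ℝ × ℝ → E} {n : WithTop ℕ∞} (hA : ContDiffOn ℝ n A {z : ℝ × ℝ | z ≠ 0}) :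
    ContDiff ℝ n fun θ => A (Real.cos θ, Real.sin θ) := by
  refine hA.comp_contDiff (Real.contDiff_cos.prodMk Real.contDiff_sin) fun θ h => ?_
  obtain ⟨hcos, hsin⟩ := Prod.mk_eq_zero.1 h
  simpa [hcos, hsin] using Real.cos_sq_add_sin_sq θ

theorem equivRealProdCLM_exp (w : ℂ) :
    equivRealProdCLM (cexp w) = (rexp w.re * Real.cos w.im, rexp w.re * Real.sin w.im) := by
  simp [Complex.exp_re, Complex.exp_im]

theorem exists_eq_equivRealProdCLM_exp {z : ℝ × ℝ} (hz : z ≠ 0) :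
    ∃ w, z = equivRealProdCLM (cexp w) :=
  ⟨Complex.log (equivRealProdCLM.symm z), by rw [Complex.exp_log (by simpa using hz)]; simp⟩

theorem apply_equivRealProdCLM_exp_of_homogeneous {A : ℝ × ℝ → ℂ} {lam : ℂ}
    (hA : ∀ t : ℝ, 0 < t → ∀ z : ℝ × ℝ, A (t • z) = (t : ℂ) ^ lam * A z) (w : ℂ) :
    A (equivRealProdCLM (cexp w)) =
      (rexp w.re : ℂ) ^ lam * A (Real.cos w.im, Real.sin w.im) := by
  rw [equivRealProdCLM_exp, ← hA _ (Real.exp_pos _)]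
  rfl

variable {mu : ℂ} {phi : ℝ → ℂ}

theorem semiconj_exp_logPolarLift {Z : ℝ × ℝ → ℂ}
    (hZ : ∀ r θ : ℝ, 0 < r → Z (r * Real.cos θ, r * Real.sin θ) =
      cexp ((Real.log r : ℂ) / mu) * cexp (I * ((θ : ℂ) + phi θ))) :
    Semiconj cexp (logPolarLift mu phi) (Z ∘ equivRealProdCLM) := by
  intro w
  rw [comp_apply, equivRealProdCLM_exp, hZ _ _ (Real.exp_pos _), Real.log_exp,
    ← Complex.exp_add, logPolarLift]

theorem fderiv_apply_exp_of_semiconj_logPolarLift {F : ℂ → ℂ}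
    (hF : Semiconj cexp (logPolarLift mu phi) F) (hphi : ContDiff ℝ 1 phi) (w : ℂ) :
    fderiv ℝ F (cexp w) (cexp w) = F (cexp w) / mu := by
  have hd := (hphi.differentiable one_ne_zero w.im).hasDerivAt
  have h := fderiv_apply_exp_mul_of_semiconj_exp hF
    (logPolarLift.contDiff hphi).contDiffAt (w := w) 1
  simpa [logPolarLift.fderiv_apply hd, ← div_eq_mul_inv] using h

theorem fderiv_apply_exp_mul_I_of_semiconj_logPolarLift {F : ℂ → ℂ}
    (hF : Semiconj cexp (logPolarLift mu phi) F) (hphi : ContDiff ℝ 1 phi) {w d : ℂ}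
    (hd : HasDerivAt phi d w.im) :
    fderiv ℝ F (cexp w) (cexp w * I) = F (cexp w) * (I * (1 + d)) := by
  rw [fderiv_apply_exp_mul_of_semiconj_exp hF (logPolarLift.contDiff hphi).contDiffAt,
    logPolarLift.fderiv_apply hd]
  simp

theorem vectorField_apply_eq_zero_of_semiconj_logPolarLift {F : ℂ → ℂ}
    (hF : Semiconj cexp (logPolarLift mu phi) F) (hphi : ContDiff ℝ 1 phi) (hmu : mu ≠ 0)
    {a b p q w : ℂ} (hp : p = b * Real.cos w.im - a * Real.sin w.im)
    (hq : q = I * (a * Real.cos w.im + b * Real.sin w.im)) (hp0 : p ≠ 0)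
    (hd : HasDerivAt phi (q / (mu * p) - 1) w.im) :
    a * fderiv ℝ F (cexp w) 1 + b * fderiv ℝ F (cexp w) I = 0 := by
  have hradial : a * Real.cos w.im + b * Real.sin w.im = -I * q := by
    linear_combination I * hq + (a * Real.cos w.im + b * Real.sin w.im) * I_sq
  have hr : (rexp w.re : ℂ) ≠ 0 := ofReal_ne_zero.2 (Real.exp_ne_zero _)
  refine (mul_eq_zero.1 ?_).resolve_left hr
  calc rexp w.re * (a * fderiv ℝ F (cexp w) 1 + b * fderiv ℝ F (cexp w) I)
      = -I * q * (F (cexp w) / mu) + p * (F (cexp w) * (I * (1 + (q / (mu * p) - 1)))) := by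
        rw [exp_re_mul_apply_one_add_apply_I, hradial, ← hp,
          fderiv_apply_exp_of_semiconj_logPolarLift hF hphi,
          fderiv_apply_exp_mul_I_of_semiconj_logPolarLift hF hphi hd]
    _ = 0 := by
        field_simp
        ring

theorem surjective_re_mul_add (hmu : 0 < mu.re) (hphi : Continuous phi)
    (hper : Periodic phi (2 * π)) : Surjective fun θ : ℝ => (mu * (θ + phi θ)).re := by
  obtain ⟨C, hC⟩ := exists_norm_le_of_periodic hper Real.two_pi_pos.ne' hphi
  have hbound (θ : ℝ) : |(mu * phi θ).re| ≤ ‖mu‖ * C := by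
    grw [abs_re_le_norm, norm_mul, hC θ]
  simpa [mul_add] using
    surjective_const_mul_add_of_abs_le hmu (f := fun θ => (mu * phi θ).re) (by fun_prop) hbound

theorem re_div_eq_re_mul_conj_div_normSq (q p : ℂ) :
    (q / p).re = (q * starRingEnd ℂ p).re / normSq p := by
  rw [div_eq_mul_inv, Complex.inv_def, ← mul_assoc, re_mul_ofReal, div_eq_mul_inv]

theorem injective_re_mul_add {p q : ℝ → ℂ} (hmu : mu ≠ 0) (hp : ∀ θ, p θ ≠ 0)
    (hphi : ∀ θ, HasDerivAt phi (q θ / (mu * p θ) - 1) θ)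
    (hint : interior {θ | (q θ * starRingEnd ℂ (p θ)).re = 0} = ∅)
    (hsign : (∀ θ, 0 ≤ (q θ * starRingEnd ℂ (p θ)).re) ∨
      ∀ θ, (q θ * starRingEnd ℂ (p θ)).re ≤ 0) :
    Injective fun θ : ℝ => (mu * (θ + phi θ)).re := by
  have hpos (θ : ℝ) : 0 < normSq (p θ) := normSq_pos.2 (hp θ)
  have hderiv (θ : ℝ) : HasDerivAt (fun θ : ℝ => (mu * (θ + phi θ)).re) (q θ / p θ).re θ := by
    have hval : mu * (((1 : ℝ) : ℂ) + (q θ / (mu * p θ) - 1)) = q θ / p θ := by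
      have := hp θ
      push_cast
      field_simp
      ring
    exact hval ▸ reCLM.hasFDerivAt.comp_hasDerivAt θ
      (((hasDerivAt_id θ).ofReal_comp.add (hphi θ)).const_mul mu)
  refine injective_of_hasDerivAt_of_interior_eq_empty hderiv ?_ ?_
  · simpa only [re_div_eq_re_mul_conj_div_normSq, le_div_iff₀ (hpos _),
      div_le_iff₀ (hpos _), zero_mul] using hsign
  · simpa only [re_div_eq_re_mul_conj_div_normSq, div_eq_zero_iff, (hpos _).ne',
      or_false] using hint

theorem contDiff_succ_of_hasDerivAt_div_sub_one {p q : ℝ → ℂ} {n : ℕ∞} (hp : ContDiff ℝ n p)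
    (hq : ContDiff ℝ n q) (hmu : mu ≠ 0) (hp0 : ∀ θ, p θ ≠ 0)
    (hphi : ∀ θ, HasDerivAt phi (q θ / (mu * p θ) - 1) θ) : ContDiff ℝ (n + 1) phi := by
  refine contDiff_succ_of_hasDerivAt hphi ?_
  simp only [div_eq_mul_inv]
  exact (hq.mul ((contDiff_const.mul hp).inv fun θ => mul_ne_zero hmu (hp0 θ))).sub contDiff_const

theorem contDiff_mul_cos_add_mul_sin {a b : ℝ → ℂ} {n : WithTop ℕ∞} (ha : ContDiff ℝ n a)
    (hb : ContDiff ℝ n b) :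
    ContDiff ℝ n fun θ => a θ * (Real.cos θ : ℂ) + b θ * (Real.sin θ : ℂ) :=
  (ha.mul (ofRealCLM.contDiff.comp Real.contDiff_cos)).add
    (hb.mul (ofRealCLM.contDiff.comp Real.contDiff_sin))

variable {Z : ℝ × ℝ → ℂ}

theorem contDiffOn_of_semiconj_logPolarLift
    (hZ : Semiconj cexp (logPolarLift mu phi) (Z ∘ equivRealProdCLM)) {n : WithTop ℕ∞}
    (hphi : ContDiff ℝ n phi) : ContDiffOn ℝ n Z {z : ℝ × ℝ | z ≠ 0} := by
  intro z hz
  obtain ⟨w, rfl⟩ := exists_eq_equivRealProdCLM_exp hz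
  refine ContDiffAt.contDiffWithinAt ?_
  rw [← equivRealProdCLM.contDiffAt_comp_iff, ContinuousLinearEquiv.symm_apply_apply]
  exact contDiffAt_of_semiconj_exp hZ (logPolarLift.contDiff hphi).contDiffAt

theorem fderiv_ne_zero_of_semiconj_logPolarLift
    (hZ : Semiconj cexp (logPolarLift mu phi) (Z ∘ equivRealProdCLM)) (hphi : ContDiff ℝ 1 phi)
    (hmu : mu ≠ 0) {z : ℝ × ℝ} (hz : z ≠ 0) : fderiv ℝ Z z ≠ 0 := by
  obtain ⟨w, rfl⟩ := exists_eq_equivRealProdCLM_exp hz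
  intro h
  have hradial := fderiv_apply_exp_of_semiconj_logPolarLift hZ hphi w
  rw [equivRealProdCLM.comp_right_fderiv, h, ContinuousLinearMap.zero_comp, zero_apply,
    ← hZ w] at hradial
  exact div_ne_zero (Complex.exp_ne_zero _) hmu hradial.symm

theorem homogeneous_vectorField_apply_eq_zero
    (hZ : Semiconj cexp (logPolarLift mu phi) (Z ∘ equivRealProdCLM)) (hphi : ContDiff ℝ 1 phi)
    (hmu : mu ≠ 0) {A B : ℝ × ℝ → ℂ} {lam : ℂ}
    (hA : ∀ t : ℝ, 0 < t → ∀ z : ℝ × ℝ, A (t • z) = (t : ℂ) ^ lam * A z)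
    (hB : ∀ t : ℝ, 0 < t → ∀ z : ℝ × ℝ, B (t • z) = (t : ℂ) ^ lam * B z) {p q : ℝ → ℂ}
    (hp : ∀ θ, p θ = B (Real.cos θ, Real.sin θ) * (Real.cos θ : ℂ) -
      A (Real.cos θ, Real.sin θ) * (Real.sin θ : ℂ))
    (hq : ∀ θ, q θ = I * (A (Real.cos θ, Real.sin θ) * (Real.cos θ : ℂ) +
      B (Real.cos θ, Real.sin θ) * (Real.sin θ : ℂ)))
    (hp0 : ∀ θ, p θ ≠ 0) (hd : ∀ θ, HasDerivAt phi (q θ / (mu * p θ) - 1) θ)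
    {z : ℝ × ℝ} (hz : z ≠ 0) :
    A z * fderiv ℝ Z z (1, 0) + B z * fderiv ℝ Z z (0, 1) = 0 := by
  obtain ⟨w, rfl⟩ := exists_eq_equivRealProdCLM_exp hz
  have hcircle := vectorField_apply_eq_zero_of_semiconj_logPolarLift hZ hphi hmu (hp w.im)
    (hq w.im) (hp0 w.im) (hd w.im)
  have hone : equivRealProdCLM 1 = (1, 0) := rfl
  have hI : equivRealProdCLM I = (0, 1) := rfl
  simp only [equivRealProdCLM.comp_right_fderiv, ContinuousLinearMap.comp_apply,
    ContinuousLinearEquiv.coe_coe, hone, hI] at hcircle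
  rw [apply_equivRealProdCLM_exp_of_homogeneous hA, apply_equivRealProdCLM_exp_of_homogeneous hB]
  linear_combination (rexp w.re : ℂ) ^ lam * hcircle

theorem surjective_of_semiconj_logPolarLift
    (hZ : Semiconj cexp (logPolarLift mu phi) (Z ∘ equivRealProdCLM)) (hZ0 : Z 0 = 0)
    (hmu : mu ≠ 0) (hg : Surjective fun θ : ℝ => (mu * (θ + phi θ)).re) : Surjective Z :=
  (surjective_of_semiconj_exp hZ (by rwa [comp_apply, map_zero])
    (logPolarLift.surjective hmu hg)).of_comp

theorem isHomeomorph_of_semiconj_logPolarLift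
    (hZ : Semiconj cexp (logPolarLift mu phi) (Z ∘ equivRealProdCLM)) (hZ0 : Z 0 = 0)
    (hmu : 0 < mu.re) (hphi : Continuous phi) (hper : Periodic phi (2 * π))
    (hg : Bijective fun θ : ℝ => (mu * (θ + phi θ)).re) : IsHomeomorph Z := by
  have hmu0 : mu ≠ 0 := fun h => by simp [h] at hmu
  have hinv : 0 < (mu⁻¹).re := inv_re mu ▸ div_pos hmu (normSq_pos.2 hmu0)
  obtain ⟨C, hC⟩ := exists_norm_le_of_periodic hper Real.two_pi_pos.ne' hphi
  have hF : IsHomeomorph (Z ∘ equivRealProdCLM) :=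
    isHomeomorph_of_semiconj_exp hZ (by rwa [comp_apply, map_zero])
      (contDiff_zero.1 (logPolarLift.contDiff (contDiff_zero.2 hphi)))
      ⟨logPolarLift.injective hmu0 hg.1, logPolarLift.surjective hmu0 hg.2⟩
      (logPolarLift.periodic_sub_id hper) (logPolarLift.tendsto_re_atBot hinv hC)
      (logPolarLift.tendsto_re_atTop hinv hC)
  simpa [comp_assoc] using hF.comp equivRealProdCLM.symm.toHomeomorph.isHomeomorph

end FirstIntegral

theorem stmt_2_general {n : ℕ∞}
    (A B : ℝ × ℝ → ℂ) (lam : ℂ)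
    (hA : ContDiffOn ℝ n A {z : ℝ × ℝ | z ≠ 0})
    (hB : ContDiffOn ℝ n B {z : ℝ × ℝ | z ≠ 0})
    (hAh : ∀ t : ℝ, 0 < t → ∀ z : ℝ × ℝ, A (t • z) = (t : ℂ) ^ lam * A z)
    (hBh : ∀ t : ℝ, 0 < t → ∀ z : ℝ × ℝ, B (t • z) = (t : ℂ) ^ lam * B z)
    (a b p q : ℝ → ℂ)
    (ha : ∀ θ : ℝ, a θ = A (Real.cos θ, Real.sin θ))
    (hb : ∀ θ : ℝ, b θ = B (Real.cos θ, Real.sin θ))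
    (hpdef : ∀ θ : ℝ, p θ = b θ * (Real.cos θ : ℂ) - a θ * (Real.sin θ : ℂ))
    (hqdef : ∀ θ : ℝ, q θ = I * (a θ * (Real.cos θ : ℂ) + b θ * (Real.sin θ : ℂ)))
    (hC1 : interior {θ : ℝ | (q θ * starRingEnd ℂ (p θ)).re = 0} = ∅)
    (hC2 : ∀ θ : ℝ, p θ ≠ 0)
    (mu : ℂ) (hmupos : 0 < mu.re)
    (phi : ℝ → ℂ)
    (hphiper : Periodic phi (2 * π))
    (hphider : ∀ θ : ℝ, HasDerivAt phi (q θ / (mu * p θ) - 1) θ)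
    (Z : ℝ × ℝ → ℂ) (hZzero : Z 0 = 0)
    (hZ : ∀ r θ : ℝ, 0 < r → Z (r * Real.cos θ, r * Real.sin θ) =
      cexp ((Real.log r : ℂ) / mu) * cexp (I * ((θ : ℂ) + phi θ))) :
    ContDiffOn ℝ (n + 1) Z {z : ℝ × ℝ | z ≠ 0} ∧
    (∀ z : ℝ × ℝ, z ≠ 0 →
      A z * fderiv ℝ Z z (1, 0) + B z * fderiv ℝ Z z (0, 1) = 0) ∧
    (∀ z : ℝ × ℝ, z ≠ 0 → fderiv ℝ Z z ≠ 0) ∧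
    Set.range Z = Set.univ ∧
    (((∀ θ : ℝ, 0 ≤ (q θ * starRingEnd ℂ (p θ)).re) ∨
      (∀ θ : ℝ, (q θ * starRingEnd ℂ (p θ)).re ≤ 0)) → IsHomeomorph Z) := by
  have hmu : mu ≠ 0 := by rintro rfl; simp at hmupos
  obtain rfl : a = fun θ => A (Real.cos θ, Real.sin θ) := funext ha
  obtain rfl : b = fun θ => B (Real.cos θ, Real.sin θ) := funext hb
  have hp : ContDiff ℝ n p := by
    simpa only [funext hpdef, sub_eq_add_neg, neg_mul] using
      contDiff_mul_cos_add_mul_sin (contDiff_comp_circle hB) (contDiff_comp_circle hA).neg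
  have hq : ContDiff ℝ n q := by
    simpa only [funext hqdef] using contDiff_const.mul
      (contDiff_mul_cos_add_mul_sin (contDiff_comp_circle hA) (contDiff_comp_circle hB))
  have hphi : ContDiff ℝ (n + 1) phi :=
    contDiff_succ_of_hasDerivAt_div_sub_one hp hq hmu hC2 hphider
  have hphi1 : ContDiff ℝ 1 phi := hphi.of_le le_add_self
  have hsurj := surjective_re_mul_add hmupos hphi.continuous hphiper
  have hsemi := semiconj_exp_logPolarLift hZ
  exact ⟨contDiffOn_of_semiconj_logPolarLift hsemi hphi,
    fun _ => homogeneous_vectorField_apply_eq_zero hsemi hphi1 hmu hAh hBh hpdef hqdef hC2 hphider,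
    fun _ => fderiv_ne_zero_of_semiconj_logPolarLift hsemi hphi1 hmu,
    (surjective_of_semiconj_logPolarLift hsemi hZzero hmu hsurj).range_eq,
    fun hsign => isHomeomorph_of_semiconj_logPolarLift hsemi hZzero hmupos hphi.continuous hphiper
      ⟨injective_re_mul_add hmu hC2 hphider hC1 hsign, hsurj⟩⟩

/-- Suppose Re μ > 0.  Then Z_μ is a first integral of L: C^∞ on ℝ²∖{0},
annihilated by L there, with nowhere vanishing differential, mapping ℝ² onto ℂ;
and if moreover L satisfies condition (P) on ℝ²∖{0}, then Z_μ is a homeomorphism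
from ℝ² onto ℂ. -/
theorem stmt_2
    (A B : ℝ × ℝ → ℂ) (lam : ℂ)
    (hA : ContDiffOn ℝ (⊤ : ℕ∞) A {z : ℝ × ℝ | z ≠ 0})
    (hB : ContDiffOn ℝ (⊤ : ℕ∞) B {z : ℝ × ℝ | z ≠ 0})
    (hlam : 1 < lam.re)
    (hAh : ∀ t : ℝ, 0 < t → ∀ z : ℝ × ℝ, A (t • z) = (t : ℂ) ^ lam * A z)
    (hBh : ∀ t : ℝ, 0 < t → ∀ z : ℝ × ℝ, B (t • z) = (t : ℂ) ^ lam * B z)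
    (a b p q : ℝ → ℂ)
    (ha : ∀ θ : ℝ, a θ = A (Real.cos θ, Real.sin θ))
    (hb : ∀ θ : ℝ, b θ = B (Real.cos θ, Real.sin θ))
    (hpdef : ∀ θ : ℝ, p θ = b θ * (Real.cos θ : ℂ) - a θ * (Real.sin θ : ℂ))
    (hqdef : ∀ θ : ℝ, q θ = Complex.I * (a θ * (Real.cos θ : ℂ) + b θ * (Real.sin θ : ℂ)))
    (hC1 : interior {θ : ℝ | (q θ * (starRingEnd ℂ) (p θ)).re = 0} = ∅)
    (hC2 : ∀ θ : ℝ, p θ ≠ 0)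
    (mu : ℂ)
    (hmudef : mu = (1 / (2 * Real.pi)) * ∫ θ in (0:ℝ)..(2 * Real.pi), q θ / p θ)
    (hmupos : 0 < mu.re)
    (phi : ℝ → ℂ)
    (hphiper : Function.Periodic phi (2 * Real.pi))
    (hphider : ∀ θ : ℝ, HasDerivAt phi (q θ / (mu * p θ) - 1) θ)
    (hphimean : (∫ θ in (0:ℝ)..(2 * Real.pi), phi θ) = 0)
    (Z : ℝ × ℝ → ℂ) (hZzero : Z 0 = 0)
    (hZ : ∀ r θ : ℝ, 0 < r → Z (r * Real.cos θ, r * Real.sin θ) =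
      Complex.exp ((Real.log r : ℂ) / mu) * Complex.exp (Complex.I * ((θ : ℂ) + phi θ))) :
    ContDiffOn ℝ (⊤ : ℕ∞) Z {z : ℝ × ℝ | z ≠ 0} ∧
    (∀ z : ℝ × ℝ, z ≠ 0 →
      A z * fderiv ℝ Z z (1, 0) + B z * fderiv ℝ Z z (0, 1) = 0) ∧
    (∀ z : ℝ × ℝ, z ≠ 0 → fderiv ℝ Z z ≠ 0) ∧
    Set.range Z = Set.univ ∧
    (((∀ θ : ℝ, 0 ≤ (q θ * (starRingEnd ℂ) (p θ)).re) ∨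
      (∀ θ : ℝ, (q θ * (starRingEnd ℂ) (p θ)).re ≤ 0)) → IsHomeomorph Z) :=
  stmt_2_general A B lam hA hB hAh hBh a b p q ha hb hpdef hqdef hC1 hC2 mu hmupos phi hphiper
    hphider Z hZzero hZ
end

section
/- Suppose L satisfies condition (P) in ℝ²∖{0} (so that Re μ > 0 and Z_μ : ℝ² → ℂ is a homeomorphism). Let Ω ⊆ ℝ² be open. Then a function u ∈ C⁰(Ω) that is C¹ on Ω∖{0} satisfies Lu = 0 pointwise on Ω∖{0} if and only if there exists a holomorphic function H on the open set Z_μ(Ω) such that u = H ∘ Z_μ on Ω. -/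
open Real Complex Set

/-!
Let `R` and `M` be the real and imaginary parts of `μ (θ + φ)`, whose derivative is `q / p`. In the
coordinates `(σ, θ)` with `log r = σ + M θ`, the equation `L u = 0` becomes the degenerate
Cauchy-Riemann equation `∂v/∂θ = i R' ∂v/∂σ`, and `Z = exp (ζ / μ)` with `ζ = σ + i R θ`.
Condition (P) and (C1) make `R` an increasing homeomorphism, maybe not a diffeomorphism; still,
Green's theorem for `v (dσ + i R' dθ)` turns into Morera's theorem for `v dζ`, so `L u = 0` says
exactly that `v` is holomorphic in `ζ`. As `Z` is injective and open, this is holomorphy in `Z`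
away from the origin, and continuity of `u` removes the singularity there.
-/

open Filter Topology Function intervalIntegral
open scoped Interval

section RealAnalysis

lemma integral_pos_of_interior_zeros_eq_empty {f : ℝ → ℝ} (hf : Continuous f) (h0 : ∀ t, 0 ≤ f t)
    (hint : interior {t | f t = 0} = ∅) {a b : ℝ} (hab : a < b) : 0 < ∫ t in a..b, f t := by
  have hIoo : ¬ Ioo a b ⊆ {t | f t = 0} := fun hsub =>
    (nonempty_Ioo.mpr hab).ne_empty (subset_empty_iff.mp
      (hint ▸ interior_maximal hsub isOpen_Ioo))
  obtain ⟨c, hc, hfc⟩ := not_subset.mp hIoo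
  exact integral_pos hab hf.continuousOn (fun t _ => h0 t)
    ⟨c, Ioo_subset_Icc_self hc, (h0 c).lt_of_ne' hfc⟩

lemma nonneg_and_integral_pos_of_integral_nonneg {f : ℝ → ℝ} (hf : Continuous f)
    (hsign : (∀ t, 0 ≤ f t) ∨ ∀ t, f t ≤ 0) (hint : interior {t | f t = 0} = ∅) {a b : ℝ}
    (hab : a < b) (hI : 0 ≤ ∫ t in a..b, f t) : (∀ t, 0 ≤ f t) ∧ 0 < ∫ t in a..b, f t := by
  rcases hsign with h0 | h0
  · exact ⟨h0, integral_pos_of_interior_zeros_eq_empty hf h0 hint hab⟩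
  · have hneg : 0 < ∫ t in a..b, -f t :=
      integral_pos_of_interior_zeros_eq_empty hf.neg (fun t => neg_nonneg.mpr (h0 t))
        (by simpa using hint) hab
    rw [integral_neg] at hneg
    linarith

lemma strictMono_of_hasDerivAt_of_interior_zeros_eq_empty {f f' : ℝ → ℝ}
    (hf : ∀ t, HasDerivAt f (f' t) t) (hf' : Continuous f') (h0 : ∀ t, 0 ≤ f' t)
    (hint : interior {t | f' t = 0} = ∅) : StrictMono f := by
  intro s t hst
  rw [← sub_pos, ← integral_eq_sub_of_hasDerivAt (fun x _ => hf x) (hf'.intervalIntegrable s t)]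
  exact integral_pos_of_interior_zeros_eq_empty hf' h0 hint hst

lemma surjective_mul_add_of_bounded {m C : ℝ} (hm : 0 < m) {g : ℝ → ℝ} (hg : Continuous g)
    (hC : ∀ t, |g t| ≤ C) : Surjective fun t => m * t + g t := by
  refine Continuous.surjective (by fun_prop) ?_ ?_
  · exact tendsto_atTop_add_right_of_le _ (-C) (tendsto_id.const_mul_atTop hm)
      fun t => (abs_le.mp (hC t)).1
  · exact tendsto_atBot_add_right_of_ge _ C (tendsto_id.const_mul_atBot hm)
      fun t => (abs_le.mp (hC t)).2

lemma integral_comp_orderIso_symm {E : Type*} [NormedAddCommGroup E] [NormedSpace ℝ E]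
    (R : ℝ ≃o ℝ) {R' : ℝ → ℝ} (hR : ∀ t, HasDerivAt R (R' t) t) (hR' : Continuous R') {c d : ℝ}
    {F : ℝ → E} (hF : ContinuousOn F [[R.symm c, R.symm d]]) :
    ∫ y in c..d, F (R.symm y) = ∫ t in R.symm c..R.symm d, R' t • F t := by
  have hF' : ContinuousOn (F ∘ R.symm) (R '' [[R.symm c, R.symm d]]) :=
    hF.comp R.symm.continuous.continuousOn fun _ ⟨t, ht, hy⟩ => by simpa [← hy] using ht
  simpa using (integral_deriv_smul_comp' (fun t _ => hR t) hR'.continuousOn hF').symm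

end RealAnalysis

lemma differentiableAt_of_comp_hasStrictDerivAt {𝕜 F : Type*} [NontriviallyNormedField 𝕜]
    [CompleteSpace 𝕜] [NormedAddCommGroup F] [NormedSpace 𝕜 F] {e : 𝕜 → 𝕜} {e' ζ : 𝕜}
    (he : HasStrictDerivAt e e' ζ) (he' : e' ≠ 0) {H : 𝕜 → F}
    (hH : DifferentiableAt 𝕜 (H ∘ e) ζ) : DifferentiableAt 𝕜 H (e ζ) := by
  let g := he.localInverse e e' ζ he'
  have hgζ : g (e ζ) = ζ := (he.eventually_left_inverse he').self_of_nhds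
  have hg : DifferentiableAt 𝕜 g (e ζ) := (he.to_localInverse he').hasDerivAt.differentiableAt
  refine (DifferentiableAt.comp (e ζ) (hgζ.symm ▸ hH) hg).congr_of_eventuallyEq ?_
  filter_upwards [he.eventually_right_inverse he'] with w hw
  exact congrArg H hw.symm

section DegenerateCauchyRiemann

variable {E : Type*} [NormedAddCommGroup E] [NormedSpace ℂ E]

lemma fderiv_smul_comp_snd_apply_fst {g : ℝ → ℂ} {v : ℝ × ℝ → E} {x : ℝ × ℝ}
    (hg : DifferentiableAt ℝ g x.2) (hv : DifferentiableAt ℝ v x) :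
    fderiv ℝ (fun y => g y.2 • v y) x (1, 0) = g x.2 • fderiv ℝ v x (1, 0) := by
  have hg2 : HasFDerivAt (fun y : ℝ × ℝ => g y.2) (fderiv ℝ g x.2 ∘L .snd ℝ ℝ ℝ) x :=
    hg.hasFDerivAt.comp x hasFDerivAt_snd
  have hgv : HasFDerivAt (fun y => g y.2 • v y) _ x := hg2.smul hv.hasFDerivAt
  simp [hgv.fderiv]

/-- Green's theorem for the form `v • (ds + g dt)`, which is closed by the hypothesis on `v`. -/
lemma boundary_integral_eq_zero_of_fderiv_eq_smul {g : ℝ → ℂ} (hg : Differentiable ℝ g)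
    {v : ℝ × ℝ → E} {a₁ a₂ b₁ b₂ : ℝ}
    (hv : ∀ x ∈ [[a₁, b₁]] ×ˢ [[a₂, b₂]], DifferentiableAt ℝ v x)
    (hgv : ∀ x ∈ [[a₁, b₁]] ×ˢ [[a₂, b₂]], fderiv ℝ v x (0, 1) = g x.2 • fderiv ℝ v x (1, 0)) :
    (∫ s in a₁..b₁, v (s, a₂)) - (∫ s in a₁..b₁, v (s, b₂)) +
      (∫ t in a₂..b₂, g t • v (b₁, t)) - (∫ t in a₂..b₂, g t • v (a₁, t)) = 0 := by
  let f : ℝ × ℝ → E := fun x => -(g x.2 • v x)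
  have hvc : ContinuousOn v ([[a₁, b₁]] ×ˢ [[a₂, b₂]]) := fun x hx =>
    (hv x hx).continuousAt.continuousWithinAt
  have hf : ∀ x ∈ [[a₁, b₁]] ×ˢ [[a₂, b₂]], DifferentiableAt ℝ f x := fun x hx =>
    (((hg x.2).comp x differentiableAt_snd).smul (hv x hx)).neg
  have hclosed : ∀ x ∈ [[a₁, b₁]] ×ˢ [[a₂, b₂]],
      fderiv ℝ f x (1, 0) + fderiv ℝ v x (0, 1) = 0 := by
    intro x hx
    rw [show f = -fun y => g y.2 • v y from rfl, fderiv_neg, neg_apply,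
      fderiv_smul_comp_snd_apply_fst (hg x.2) (hv x hx), hgv x hx, neg_add_cancel]
  have hint : Ioo (min a₁ b₁) (max a₁ b₁) ×ˢ Ioo (min a₂ b₂) (max a₂ b₂) ⊆
      [[a₁, b₁]] ×ˢ [[a₂, b₂]] := prod_mono Ioo_subset_Icc_self Ioo_subset_Icc_self
  have hGreen := MeasureTheory.integral2_divergence_prod_of_hasFDerivAt f v (fderiv ℝ f)
    (fderiv ℝ v) a₁ a₂ b₁ b₂ (fun x hx => (hf x hx).continuousAt.continuousWithinAt) hvc
    (fun x hx => (hf x (hint hx)).hasFDerivAt) (fun x hx => (hv x (hint hx)).hasFDerivAt)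
    (MeasureTheory.integrableOn_zero.congr_fun (fun x hx => (hclosed x hx).symm)
      (measurableSet_uIcc.prod measurableSet_uIcc))
  have hzero : ∫ s in a₁..b₁, ∫ t in a₂..b₂,
      (fderiv ℝ f (s, t) (1, 0) + fderiv ℝ v (s, t) (0, 1)) = 0 :=
    integral_zero_ae <| .of_forall fun s hs => integral_zero_ae <| .of_forall fun t ht =>
      hclosed (s, t) ⟨uIoc_subset_uIcc hs, uIoc_subset_uIcc ht⟩
  rw [hzero] at hGreen
  simp only [f, integral_neg] at hGreen
  linear_combination (norm := module) hGreen

/-- The homeomorphism `(σ, θ) ↦ σ + i R(θ)`. It straightens the degenerate Cauchy-Riemann equation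
`∂v/∂θ = i R'(θ) ∂v/∂σ`. -/
noncomputable def straighten (R : ℝ ≃o ℝ) : ℝ × ℝ ≃ₜ ℂ :=
  ((Homeomorph.refl ℝ).prodCongr R.toHomeomorph).trans equivRealProdCLM.symm.toHomeomorph

lemma straighten_apply (R : ℝ ≃o ℝ) (x : ℝ × ℝ) : straighten R x = x.1 + R x.2 * I :=
  mk_eq_add_mul_I _ _

lemma straighten_symm_apply (R : ℝ ≃o ℝ) (ζ : ℂ) :
    (straighten R).symm ζ = (ζ.re, R.symm ζ.im) := rfl

variable {R : ℝ ≃o ℝ} {R' : ℝ → ℝ}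

lemma hasFDerivAt_straighten {x : ℝ × ℝ} {c : ℝ} (hR : HasDerivAt R c x.2) :
    HasFDerivAt (straighten R)
      (ofRealCLM ∘L .fst ℝ ℝ ℝ + (c * I) • ofRealCLM ∘L .snd ℝ ℝ ℝ) x := by
  have hRI : HasFDerivAt (fun y : ℝ × ℝ => (R y.2 * I : ℂ)) _ x :=
    (ofRealCLM.hasFDerivAt.comp x (hR.comp_hasFDerivAt x hasFDerivAt_snd)).mul_const I
  refine (((ofRealCLM.hasFDerivAt.comp x hasFDerivAt_fst).add hRI).congr_fderiv ?_)
    |>.congr_of_eventuallyEq (.of_forall (straighten_apply R))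
  ext <;> simp [mul_comm]

variable [CompleteSpace E] {V : Set (ℝ × ℝ)} {v : ℝ × ℝ → E}

/-- Morera's theorem: a rectangle pulls back under `straighten R` to a rectangle, on whose boundary
the substitution `y = R t` turns the integral of `v • dζ` into that of `v • (dσ + i R' dθ)`. -/
lemma differentiableOn_comp_straighten_symm (hR : ∀ t, HasDerivAt R (R' t) t)
    (hR' : Differentiable ℝ R') (hV : IsOpen V) (hv : DifferentiableOn ℝ v V)
    (hCR : ∀ x ∈ V, fderiv ℝ v x (0, 1) = (I * R' x.2) • fderiv ℝ v x (1, 0)) :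
    DifferentiableOn ℂ (v ∘ (straighten R).symm) ((straighten R).symm ⁻¹' V) := by
  refine (isConservativeOn_and_continuousOn_iff_isDifferentiableOn
    (hV.preimage (straighten R).symm.continuous)).mp
    ⟨fun z w hzw => ?_, hv.continuousOn.comp (straighten R).symm.continuous.continuousOn
      fun _ h => h⟩
  have hrect : [[z.re, w.re]] ×ˢ [[R.symm z.im, R.symm w.im]] ⊆ V := by
    rintro ⟨s, t⟩ ⟨hs, ht⟩
    have hRt : R t ∈ [[z.im, w.im]] := by simpa using R.monotone.mapsTo_uIcc ht
    simpa [straighten_symm_apply] using @hzw ⟨s, R t⟩ ⟨hs, hRt⟩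
  have hboundary := boundary_integral_eq_zero_of_fderiv_eq_smul
    (g := fun t => I * R' t) (fun t => (ofRealCLM.differentiableAt.comp t (hR' t)).const_mul I)
    (fun x hx => hv.differentiableAt (hV.mem_nhds (hrect hx))) (fun x hx => hCR x (hrect hx))
  have hside : ∀ s ∈ [[z.re, w.re]], ∫ y in z.im..w.im, v (s, R.symm y) =
      ∫ t in R.symm z.im..R.symm w.im, R' t • v (s, t) := fun s hs =>
    integral_comp_orderIso_symm R hR hR'.continuous (F := fun t => v (s, t))
      (hv.continuousOn.comp (by fun_prop) fun t ht => hrect ⟨hs, ht⟩)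
  rw [← add_eq_zero_iff_eq_neg, wedgeIntegral_add_wedgeIntegral_eq]
  simpa [straighten_symm_apply, hside, mul_smul, integral_smul] using hboundary

lemma differentiableOn_comp_straighten_symm_iff (hR : ∀ t, HasDerivAt R (R' t) t)
    (hR' : Differentiable ℝ R') (hV : IsOpen V) (hv : DifferentiableOn ℝ v V) :
    DifferentiableOn ℂ (v ∘ (straighten R).symm) ((straighten R).symm ⁻¹' V) ↔
      ∀ x ∈ V, fderiv ℝ v x (0, 1) = (I * R' x.2) • fderiv ℝ v x (1, 0) := by
  refine ⟨fun hG x hx => ?_, differentiableOn_comp_straighten_symm hR hR' hV hv⟩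
  have hGx : HasDerivAt (v ∘ (straighten R).symm) _ (straighten R x) :=
    (hG.differentiableAt ((hV.preimage (straighten R).symm.continuous).mem_nhds
      (by simpa using hx))).hasDerivAt
  have hvx := hGx.hasFDerivAt.restrictScalars ℝ |>.comp x (hasFDerivAt_straighten (hR x.2))
  rw [comp_assoc, (straighten R).symm_comp_self, comp_id] at hvx
  simp [hvx.fderiv, mul_comm]

end DegenerateCauchyRiemann

section Uniformization

variable {X : Type*} {P : ℂ → X} {Z : X → ℂ} {x₀ : X} {μ : ℂ}

lemma injective_of_comp_eq_exp (hμ : μ ≠ 0) (hZ₀ : Z x₀ = 0)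
    (hZP : ∀ ζ, Z (P ζ) = Complex.exp (ζ / μ)) (hP : ∀ x ≠ x₀, x ∈ range P)
    (hper : Periodic P (2 * π * I * μ)) : Injective Z := by
  have hZ_ne : ∀ x ≠ x₀, Z x ≠ 0 := by
    intro x hx
    obtain ⟨ζ, rfl⟩ := hP x hx
    exact hZP ζ ▸ Complex.exp_ne_zero _
  intro x y hxy
  rcases eq_or_ne x x₀ with rfl | hx
  · by_contra hy
    exact hZ_ne y (Ne.symm hy) (hxy ▸ hZ₀)
  rcases eq_or_ne y x₀ with rfl | hy
  · exact absurd (hxy.trans hZ₀) (hZ_ne x hx)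
  obtain ⟨ζ, rfl⟩ := hP x hx
  obtain ⟨η, rfl⟩ := hP y hy
  rw [hZP, hZP, Complex.exp_eq_exp_iff_exists_int] at hxy
  obtain ⟨n, hn⟩ := hxy
  have hζ : ζ = η + n * (2 * π * I * μ) := by
    field_simp at hn
    linear_combination hn
  rw [hζ, hper.int_mul n η]

lemma surjective_of_comp_eq_exp (hμ : μ ≠ 0) (hZ₀ : Z x₀ = 0)
    (hZP : ∀ ζ, Z (P ζ) = Complex.exp (ζ / μ)) : Surjective Z := by
  intro w
  rcases eq_or_ne w 0 with rfl | hw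
  · exact ⟨x₀, hZ₀⟩
  · exact ⟨P (μ * Complex.log w), by rw [hZP, mul_div_cancel_left₀ _ hμ, Complex.exp_log hw]⟩

variable [TopologicalSpace X]

lemma isOpenMap_of_comp_of_comap_nhds_le {e' : ℂ → ℂ} (hPc : Continuous P)
    (hP : ∀ x ≠ x₀, x ∈ range P) (he : ∀ ζ, HasStrictDerivAt (Z ∘ P) (e' ζ) ζ)
    (he' : ∀ ζ, e' ζ ≠ 0) (hsurj : Surjective Z) (hcomap : comap Z (𝓝 (Z x₀)) ≤ 𝓝 x₀) :
    IsOpenMap Z := by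
  refine isOpenMap_iff_nhds_le.mpr fun x => ?_
  rcases eq_or_ne x x₀ with rfl | hx
  · exact (map_comap_of_surjective hsurj _).symm.trans_le (map_mono hcomap)
  · obtain ⟨ζ, rfl⟩ := hP x hx
    calc 𝓝 (Z (P ζ)) = map (Z ∘ P) (𝓝 ζ) := ((he ζ).map_nhds_eq (he' ζ)).symm
      _ = map Z (map P (𝓝 ζ)) := map_map.symm
      _ ≤ map Z (𝓝 (P ζ)) := map_mono hPc.continuousAt

lemma comap_nhds_zero_le_of_norm_le_rpow {F : Type*} [SeminormedAddCommGroup F] {Z : F → ℂ}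
    {K β : ℝ} (hβ : 0 < β) (hZ : ∀ z, ‖z‖ ≤ (K * ‖Z z‖) ^ β) : comap Z (𝓝 0) ≤ 𝓝 0 := by
  have hZ0 : Tendsto (fun z => ‖Z z‖) (comap Z (𝓝 0)) (𝓝 0) := by
    simpa using (tendsto_comap (f := Z) (x := 𝓝 0)).norm
  have hbound : Tendsto (fun z => (K * ‖Z z‖) ^ β) (comap Z (𝓝 0)) (𝓝 0) := by
    simpa [hβ.ne'] using (hZ0.const_mul K).rpow_const (.inr hβ.le)
  exact squeeze_zero_norm hZ hbound

/-- Off `x₀` the factor `H` inherits holomorphy through the local inverses of `Z ∘ P`; at `x₀` the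
singularity is removable because `u` is continuous and `Z` is open. -/
lemma differentiableOn_comp_iff_exists_factor {E : Type*} [NormedAddCommGroup E] [NormedSpace ℂ E]
    [CompleteSpace E] {e' : ℂ → ℂ} (hPc : Continuous P) (hP : ∀ x ≠ x₀, x ∈ range P)
    (he : ∀ ζ, HasStrictDerivAt (Z ∘ P) (e' ζ) ζ) (he' : ∀ ζ, e' ζ ≠ 0)
    (hinj : Injective Z) (hopen : IsOpenMap Z) {Ω : Set X} (hΩ : IsOpen Ω) {u : X → E}
    (hu : ContinuousOn u Ω) :
    DifferentiableOn ℂ (u ∘ P) (P ⁻¹' Ω) ↔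
      ∃ H : ℂ → E, DifferentiableOn ℂ H (Z '' Ω) ∧ ∀ x ∈ Ω, u x = H (Z x) := by
  constructor
  · intro hhol
    let H : ℂ → E := extend Z u 0
    have hHZ : ∀ x, H (Z x) = u x := hinj.extend_apply u 0
    have hoff : ∀ x ∈ Ω, x ≠ x₀ → DifferentiableAt ℂ H (Z x) := by
      intro x hx hx₀
      obtain ⟨ζ, rfl⟩ := hP x hx₀
      refine differentiableAt_of_comp_hasStrictDerivAt (he ζ) (he' ζ) ?_
      rw [← comp_assoc, show H ∘ Z = u from funext hHZ]
      exact hhol.differentiableAt ((hΩ.preimage hPc).mem_nhds hx)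
    have hat : x₀ ∈ Ω → DifferentiableAt ℂ H (Z x₀) := by
      intro hx₀
      have hnhds : Z '' Ω ∈ 𝓝 (Z x₀) := hopen.image_mem_nhds (hΩ.mem_nhds hx₀)
      refine ((differentiableOn_compl_singleton_and_continuousAt_iff hnhds).mp
        ⟨?_, ?_⟩).differentiableAt hnhds
      · rintro _ ⟨⟨x, hx, rfl⟩, hne⟩
        exact (hoff x hx fun h => hne (h ▸ rfl)).differentiableWithinAt
      · have hHZ₀ : Tendsto (H ∘ Z) (𝓝 x₀) (𝓝 (H (Z x₀))) := by
          rw [hHZ, show H ∘ Z = u from funext hHZ]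
          exact hu.continuousAt (hΩ.mem_nhds hx₀)
        exact (map_mono (hopen.nhds_le x₀)).trans (map_map.trans_le hHZ₀)
    refine ⟨H, ?_, fun x _ => (hHZ x).symm⟩
    rintro _ ⟨x, hx, rfl⟩
    rcases eq_or_ne x x₀ with rfl | hx₀
    exacts [(hat hx).differentiableWithinAt, (hoff x hx hx₀).differentiableWithinAt]
  · rintro ⟨H, hH, huH⟩
    have hZP : DifferentiableOn ℂ (Z ∘ P) (P ⁻¹' Ω) := fun ζ _ =>
      (he ζ).hasDerivAt.differentiableAt.differentiableWithinAt
    exact (hH.comp hZP fun ζ hζ => mem_image_of_mem Z hζ).congr fun ζ hζ => huH _ hζ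

end Uniformization

section SkewPolar

/-- Polar coordinates on the punctured plane, with `log r = σ + M θ` in terms of `x = (σ, θ)`. -/
noncomputable def skewPolar (M : ℝ → ℝ) (x : ℝ × ℝ) : ℝ × ℝ :=
  Real.exp (x.1 + M x.2) • (Real.cos x.2, Real.sin x.2)

lemma cos_sin_ne_zero (θ : ℝ) : ((Real.cos θ, Real.sin θ) : ℝ × ℝ) ≠ 0 := by
  intro h
  rw [Prod.mk_eq_zero] at h
  simpa [h.1, h.2] using Real.sin_sq_add_cos_sq θ

variable {M : ℝ → ℝ}

lemma skewPolar_ne_zero (x : ℝ × ℝ) : skewPolar M x ≠ 0 :=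
  smul_ne_zero (Real.exp_ne_zero _) (cos_sin_ne_zero _)

lemma exists_skewPolar_eq {z : ℝ × ℝ} (hz : z ≠ 0) : ∃ x, skewPolar M x = z := by
  let w : ℂ := ⟨z.1, z.2⟩
  have hw : w ≠ 0 := fun h => hz (Prod.ext (congrArg re h) (congrArg im h))
  refine ⟨(Real.log ‖w‖ - M (arg w), arg w), ?_⟩
  simp [skewPolar, Real.exp_log (norm_pos_iff.mpr hw), w]

lemma norm_skewPolar_le (x : ℝ × ℝ) : ‖skewPolar M x‖ ≤ Real.exp (x.1 + M x.2) := by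
  rw [skewPolar, norm_smul, Real.norm_of_nonneg (Real.exp_nonneg _)]
  exact mul_le_of_le_one_right (Real.exp_nonneg _)
    (max_le (Real.abs_cos_le_one _) (Real.abs_sin_le_one _))

lemma continuous_skewPolar (hM : Continuous M) : Continuous (skewPolar M) := by
  unfold skewPolar
  fun_prop

variable {x : ℝ × ℝ} {M' : ℝ}

lemma hasFDerivAt_skewPolar (hM : HasDerivAt M M' x.2) :
    HasFDerivAt (skewPolar M)
      ((.fst ℝ ℝ ℝ + M' • .snd ℝ ℝ ℝ : ℝ × ℝ →L[ℝ] ℝ).smulRight (skewPolar M x) +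
        (ContinuousLinearMap.snd ℝ ℝ ℝ).smulRight
          (Real.exp (x.1 + M x.2) • (-Real.sin x.2, Real.cos x.2))) x := by
  have hexp : HasFDerivAt (fun x : ℝ × ℝ => Real.exp (x.1 + M x.2)) _ x :=
    (hasFDerivAt_fst.add (hM.comp_hasFDerivAt x hasFDerivAt_snd)).exp
  refine (hexp.smul (hasFDerivAt_snd.cos.prodMk hasFDerivAt_snd.sin)).congr_fderiv ?_
  ext <;> simp [skewPolar] <;> ring

variable {E : Type*} [NormedAddCommGroup E] [NormedSpace ℝ E] {u : ℝ × ℝ → E}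

lemma fderiv_comp_skewPolar_fst (hM : HasDerivAt M M' x.2)
    (hu : DifferentiableAt ℝ u (skewPolar M x)) :
    fderiv ℝ (u ∘ skewPolar M) x (1, 0) =
      Real.exp (x.1 + M x.2) • fderiv ℝ u (skewPolar M x) (Real.cos x.2, Real.sin x.2) := by
  rw [(hu.hasFDerivAt.comp x (hasFDerivAt_skewPolar hM)).fderiv, ← map_smul]
  simp [skewPolar]

lemma fderiv_comp_skewPolar_snd (hM : HasDerivAt M M' x.2)
    (hu : DifferentiableAt ℝ u (skewPolar M x)) :
    fderiv ℝ (u ∘ skewPolar M) x (0, 1) = M' • fderiv ℝ (u ∘ skewPolar M) x (1, 0) +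
      Real.exp (x.1 + M x.2) •
        fderiv ℝ u (skewPolar M x) (-Real.sin x.2, Real.cos x.2) := by
  rw [(hu.hasFDerivAt.comp x (hasFDerivAt_skewPolar hM)).fderiv]
  simp [-Prod.smul_mk]

end SkewPolar

section VectorField

/-- The coefficient `p` of `∂/∂θ` in `A ∂/∂x + B ∂/∂y`, on the unit circle. -/
noncomputable def angularCoeff (A B : ℝ × ℝ → ℂ) (θ : ℝ) : ℂ :=
  B (Real.cos θ, Real.sin θ) * Real.cos θ - A (Real.cos θ, Real.sin θ) * Real.sin θ

/-- The coefficient `q` in the polar form `p ∂/∂θ - i q ∂/∂r` of `A ∂/∂x + B ∂/∂y` on the unit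
circle. -/
noncomputable def radialCoeff (A B : ℝ × ℝ → ℂ) (θ : ℝ) : ℂ :=
  I * (A (Real.cos θ, Real.sin θ) * Real.cos θ + B (Real.cos θ, Real.sin θ) * Real.sin θ)

variable {A B : ℝ × ℝ → ℂ}

lemma differentiable_comp_cos_sin {F : ℝ × ℝ → ℂ} (hF : DifferentiableOn ℝ F {z | z ≠ 0}) :
    Differentiable ℝ fun θ => F (Real.cos θ, Real.sin θ) := fun θ =>
  (hF.differentiableAt (isOpen_ne.mem_nhds (cos_sin_ne_zero θ))).comp θ
    (Real.differentiableAt_cos.prodMk Real.differentiableAt_sin)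

lemma differentiable_ofReal_cos : Differentiable ℝ fun θ : ℝ => (Real.cos θ : ℂ) :=
  ofRealCLM.differentiable.comp Real.differentiable_cos

lemma differentiable_ofReal_sin : Differentiable ℝ fun θ : ℝ => (Real.sin θ : ℂ) :=
  ofRealCLM.differentiable.comp Real.differentiable_sin

lemma differentiable_angularCoeff (hA : DifferentiableOn ℝ A {z | z ≠ 0})
    (hB : DifferentiableOn ℝ B {z | z ≠ 0}) : Differentiable ℝ (angularCoeff A B) :=
  ((differentiable_comp_cos_sin hB).mul differentiable_ofReal_cos).sub
    ((differentiable_comp_cos_sin hA).mul differentiable_ofReal_sin)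

lemma differentiable_radialCoeff (hA : DifferentiableOn ℝ A {z | z ≠ 0})
    (hB : DifferentiableOn ℝ B {z | z ≠ 0}) : Differentiable ℝ (radialCoeff A B) :=
  (((differentiable_comp_cos_sin hA).mul differentiable_ofReal_cos).add
    ((differentiable_comp_cos_sin hB).mul differentiable_ofReal_sin)).const_mul I

variable {E : Type*} [NormedAddCommGroup E] [NormedSpace ℂ E]

lemma smul_add_smul_eq_angularCoeff_sub_radialCoeff (A B : ℝ × ℝ → ℂ) (D : ℝ × ℝ →L[ℝ] E)
    (θ : ℝ) :
    A (Real.cos θ, Real.sin θ) • D (1, 0) + B (Real.cos θ, Real.sin θ) • D (0, 1) =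
      angularCoeff A B θ • D (-Real.sin θ, Real.cos θ) -
        (I * radialCoeff A B θ) • D (Real.cos θ, Real.sin θ) := by
  have hD : ∀ s t : ℝ, D (s, t) = (s : ℂ) • D (1, 0) + (t : ℂ) • D (0, 1) := fun s t => by
    rw [Complex.coe_smul, Complex.coe_smul, ← map_smul, ← map_smul, ← map_add]
    simp
  rw [hD (-Real.sin θ), hD (Real.cos θ), angularCoeff, radialCoeff]
  generalize A (Real.cos θ, Real.sin θ) = a
  generalize B (Real.cos θ, Real.sin θ) = b
  have hcs := Complex.sin_sq_add_cos_sq θ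
  push_cast
  generalize Complex.cos θ = c at *
  generalize Complex.sin θ = s at *
  match_scalars
  · linear_combination -a * hcs + c * (a * c + b * s) * I_sq
  · linear_combination -b * hcs + s * (a * c + b * s) * I_sq

variable {lam : ℂ} {M : ℝ → ℝ} {M' R' : ℝ} {x : ℝ × ℝ} {u : ℝ × ℝ → E}

/-- Subtracting `Im (q / p)` times the radial derivative, which is the effect of the skew term `M`,
leaves `q / p` with its real part only. -/
lemma exp_smul_vectorField_skewPolar
    (hA : ∀ t : ℝ, 0 < t → ∀ z : ℝ × ℝ, A (t • z) = (t : ℂ) ^ lam * A z)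
    (hB : ∀ t : ℝ, 0 < t → ∀ z : ℝ × ℝ, B (t • z) = (t : ℂ) ^ lam * B z)
    (hp : angularCoeff A B x.2 ≠ 0) (hM : HasDerivAt M M' x.2)
    (hqp : radialCoeff A B x.2 / angularCoeff A B x.2 = R' + M' * I)
    (hu : DifferentiableAt ℝ u (skewPolar M x)) :
    (Real.exp (x.1 + M x.2) : ℂ) • (A (skewPolar M x) • fderiv ℝ u (skewPolar M x) (1, 0) +
        B (skewPolar M x) • fderiv ℝ u (skewPolar M x) (0, 1)) =
      ((Real.exp (x.1 + M x.2) : ℂ) ^ lam * angularCoeff A B x.2) •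
        (fderiv ℝ (u ∘ skewPolar M) x (0, 1) -
          (I * R') • fderiv ℝ (u ∘ skewPolar M) x (1, 0)) := by
  have hq : radialCoeff A B x.2 = (R' + M' * I) * angularCoeff A B x.2 := (div_eq_iff hp).mp hqp
  have hAx : A (skewPolar M x) = _ := hA _ (Real.exp_pos (x.1 + M x.2)) _
  have hBx : B (skewPolar M x) = _ := hB _ (Real.exp_pos (x.1 + M x.2)) _
  rw [hAx, hBx, mul_smul, mul_smul, ← smul_add, smul_add_smul_eq_angularCoeff_sub_radialCoeff,
    fderiv_comp_skewPolar_snd hM hu, fderiv_comp_skewPolar_fst hM hu, hq]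
  simp only [← Complex.coe_smul]
  generalize fderiv ℝ u (skewPolar M x) (Real.cos x.2, Real.sin x.2) = uᵣ
  generalize Real.exp (x.1 + M x.2) = r
  match_scalars
  · ring
  · linear_combination -((r : ℂ) ^ lam * angularCoeff A B x.2 * r * M') * I_sq

lemma vectorField_eq_zero_iff_fderiv_skewPolar
    (hA : ∀ t : ℝ, 0 < t → ∀ z : ℝ × ℝ, A (t • z) = (t : ℂ) ^ lam * A z)
    (hB : ∀ t : ℝ, 0 < t → ∀ z : ℝ × ℝ, B (t • z) = (t : ℂ) ^ lam * B z)
    (hp : angularCoeff A B x.2 ≠ 0) (hM : HasDerivAt M M' x.2)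
    (hqp : radialCoeff A B x.2 / angularCoeff A B x.2 = R' + M' * I)
    (hu : DifferentiableAt ℝ u (skewPolar M x)) :
    A (skewPolar M x) • fderiv ℝ u (skewPolar M x) (1, 0) +
        B (skewPolar M x) • fderiv ℝ u (skewPolar M x) (0, 1) = 0 ↔
      fderiv ℝ (u ∘ skewPolar M) x (0, 1) =
        (I * R') • fderiv ℝ (u ∘ skewPolar M) x (1, 0) := by
  have hr : (Real.exp (x.1 + M x.2) : ℂ) ≠ 0 := ofReal_ne_zero.mpr (Real.exp_ne_zero _)
  have hrp : (Real.exp (x.1 + M x.2) : ℂ) ^ lam * angularCoeff A B x.2 ≠ 0 :=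
    mul_ne_zero (cpow_ne_zero_iff.mpr (.inl hr)) hp
  rw [← smul_eq_zero_iff_right hr, exp_smul_vectorField_skewPolar hA hB hp hM hqp hu,
    smul_eq_zero_iff_right hrp, sub_eq_zero]

end VectorField

lemma re_mul_conj_eq_normSq_smul_re_div (z w : ℂ) :
    (z * (starRingEnd ℂ) w).re = normSq w • (z / w).re := by
  rcases eq_or_ne w 0 with rfl | hw
  · simp
  · rw [smul_eq_mul, ← re_ofReal_mul, ← mul_conj]
    congr 1
    field_simp

section RotationNumber

variable {f : ℝ → ℂ} {μ : ℂ}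

lemma hasDerivAt_mul_id_add {φ : ℝ → ℂ} {p q : ℂ} {θ : ℝ} (hμ : μ ≠ 0)
    (hφ : HasDerivAt φ (q / (μ * p) - 1) θ) :
    HasDerivAt (fun θ : ℝ => μ * (θ + φ θ)) (q / p) θ :=
  ((hasDerivAt_id θ).ofReal_comp.add hφ |>.const_mul μ).congr_deriv (by
    push_cast
    field_simp
    ring)

lemma re_nonneg_and_re_average_pos (hf : Continuous f)
    (hsign : (∀ θ, 0 ≤ (f θ).re) ∨ ∀ θ, (f θ).re ≤ 0)
    (hint : interior {θ | (f θ).re = 0} = ∅)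
    (hμ : μ = (1 / (2 * π)) * ∫ θ in (0 : ℝ)..(2 * π), f θ) (hμ0 : 0 ≤ μ.re) :
    (∀ θ, 0 ≤ (f θ).re) ∧ 0 < μ.re := by
  have hre : μ.re = 1 / (2 * π) * ∫ θ in (0 : ℝ)..(2 * π), (f θ).re := by
    have hI : ∫ θ in (0 : ℝ)..(2 * π), (f θ).re = _ :=
      reCLM.intervalIntegral_comp_comm (hf.intervalIntegrable 0 (2 * π))
    rw [hI, hμ, reCLM_apply, ← re_ofReal_mul]
    push_cast
    rfl
  have hpos : 0 < 1 / (2 * π) := by positivity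
  rw [hre] at hμ0 ⊢
  obtain ⟨h0, hI⟩ := nonneg_and_integral_pos_of_integral_nonneg (continuous_re.comp hf) hsign hint
    two_pi_pos (nonneg_of_mul_nonneg_right hμ0 hpos)
  exact ⟨h0, mul_pos hpos hI⟩

lemma exists_orderIso_eq_re {φ : ℝ → ℂ} (hμ : 0 < μ.re) (hφ : Continuous φ)
    (hper : Periodic φ (2 * π)) (hderiv : ∀ θ, HasDerivAt (fun θ : ℝ => μ * (θ + φ θ)) (f θ) θ)
    (hf : Continuous f) (h0 : ∀ θ, 0 ≤ (f θ).re) (hint : interior {θ | (f θ).re = 0} = ∅) :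
    ∃ R : ℝ ≃o ℝ, ∀ θ, R θ = (μ * (θ + φ θ)).re := by
  have hmono : StrictMono fun θ : ℝ => (μ * (θ + φ θ)).re :=
    strictMono_of_hasDerivAt_of_interior_zeros_eq_empty
      (fun θ => reCLM.hasFDerivAt.comp_hasDerivAt θ (hderiv θ)) (continuous_re.comp hf) h0 hint
  obtain ⟨C, hC⟩ := (hper.isBounded_of_continuous two_pi_pos.ne' hφ).exists_norm_le
  have hbdd : ∀ θ, |(μ * φ θ).re| ≤ ‖μ‖ * C := fun θ =>
    calc |(μ * φ θ).re| ≤ ‖μ * φ θ‖ := abs_re_le_norm _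
      _ = ‖μ‖ * ‖φ θ‖ := norm_mul _ _
      _ ≤ ‖μ‖ * C := by gcongr; exact hC _ (mem_range_self θ)
  have hsurj : Surjective fun θ : ℝ => (μ * (θ + φ θ)).re := by
    simpa only [mul_add, add_re, re_mul_ofReal] using
      surjective_mul_add_of_bounded hμ (g := fun θ => (μ * φ θ).re)
        (continuous_re.comp (hφ.const_mul μ)) hbdd
  exact ⟨hmono.orderIsoOfSurjective _ hsurj, fun θ => rfl⟩

end RotationNumber

section Uniformizer

/-- The covering of the punctured plane by `ℂ` in which the first integral `Z` reads
`ζ ↦ exp (ζ / μ)`, see `firstIntegral_uniformizer`. -/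
noncomputable def uniformizer (M : ℝ → ℝ) (R : ℝ ≃o ℝ) : ℂ → ℝ × ℝ :=
  skewPolar M ∘ (straighten R).symm

variable {M : ℝ → ℝ} {R : ℝ ≃o ℝ}

lemma uniformizer_apply (ζ : ℂ) : uniformizer M R ζ = skewPolar M (ζ.re, R.symm ζ.im) := rfl

lemma continuous_uniformizer (hM : Continuous M) : Continuous (uniformizer M R) :=
  (continuous_skewPolar hM).comp (straighten R).symm.continuous

lemma mem_range_uniformizer {z : ℝ × ℝ} (hz : z ≠ 0) : z ∈ range (uniformizer M R) := by
  obtain ⟨x, rfl⟩ := exists_skewPolar_eq (M := M) hz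
  exact ⟨straighten R x, by simp [uniformizer]⟩

variable {μ : ℂ} {φ : ℝ → ℂ} {Z : ℝ × ℝ → ℂ}

lemma periodic_uniformizer (hφ : Periodic φ (2 * π))
    (hRM : ∀ θ, (R θ + M θ * I : ℂ) = μ * (θ + φ θ)) :
    Periodic (uniformizer M R) (2 * π * I * μ) := by
  have hshift : ∀ θ, R (θ + 2 * π) = R θ + 2 * π * μ.re ∧ M (θ + 2 * π) = M θ + 2 * π * μ.im := by
    intro θ
    have h : (R (θ + 2 * π) + M (θ + 2 * π) * I : ℂ) = R θ + M θ * I + 2 * π * μ := by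
      rw [hRM, hRM, hφ]
      push_cast
      ring
    simpa using Complex.ext_iff.mp h
  intro ζ
  have hR : R.symm (ζ.im + 2 * π * μ.re) = R.symm ζ.im + 2 * π := by
    rw [OrderIso.symm_apply_eq, (hshift _).1, R.apply_symm_apply]
  have hre : (ζ + 2 * π * I * μ).re = ζ.re - 2 * π * μ.im := by simp [sub_eq_add_neg]
  have him : (ζ + 2 * π * I * μ).im = ζ.im + 2 * π * μ.re := by simp
  simp only [uniformizer_apply, skewPolar, hre, him, hR, (hshift _).2, Real.cos_add_two_pi,
    Real.sin_add_two_pi, sub_add_add_cancel]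

lemma firstIntegral_uniformizer (hμ : μ ≠ 0)
    (hRM : ∀ θ, (R θ + M θ * I : ℂ) = μ * (θ + φ θ))
    (hZ : ∀ r θ : ℝ, 0 < r → Z (r * Real.cos θ, r * Real.sin θ) =
      Complex.exp (Real.log r / μ) * Complex.exp (I * (θ + φ θ))) (ζ : ℂ) :
    Z (uniformizer M R ζ) = Complex.exp (ζ / μ) := by
  have hθ := hRM (R.symm ζ.im)
  rw [R.apply_symm_apply] at hθ
  have hexp : ((ζ.re + M (R.symm ζ.im) : ℝ) : ℂ) +
      I * (μ * (R.symm ζ.im + φ (R.symm ζ.im))) = ζ := by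
    rw [← hθ]
    push_cast
    linear_combination re_add_im ζ + M (R.symm ζ.im) * I_sq
  simp only [uniformizer_apply, skewPolar, Prod.smul_mk, smul_eq_mul, hZ _ _ (Real.exp_pos _),
    Real.log_exp, ← Complex.exp_add]
  congr 1
  field_simp
  linear_combination hexp

lemma norm_le_rpow_of_polar {C : ℝ} (hμ : 0 < (μ⁻¹).re) (hφ : ∀ θ, (φ θ).im ≤ C)
    (hZ : ∀ r θ : ℝ, 0 < r → Z (r * Real.cos θ, r * Real.sin θ) =
      Complex.exp (Real.log r / μ) * Complex.exp (I * (θ + φ θ))) (z : ℝ × ℝ) :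
    ‖z‖ ≤ (Real.exp C * ‖Z z‖) ^ ((μ⁻¹).re)⁻¹ := by
  rcases eq_or_ne z 0 with rfl | hz
  · rw [norm_zero]
    positivity
  obtain ⟨⟨σ, θ⟩, rfl⟩ := exists_skewPolar_eq (M := fun _ => 0) hz
  have hr : 0 < Real.exp (σ + 0) := Real.exp_pos _
  refine (norm_skewPolar_le _).trans
    ((Real.le_rpow_inv_iff_of_pos hr.le (by positivity) hμ).mpr ?_)
  have hnorm : ‖Z (skewPolar (fun _ => 0) (σ, θ))‖ =
      Real.exp (σ + 0) ^ (μ⁻¹).re * Real.exp (-(φ θ).im) := by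
    refine (congrArg norm (hZ _ θ hr)).trans ?_
    rw [norm_mul, norm_exp, norm_exp, div_eq_mul_inv, re_ofReal_mul, Real.rpow_def_of_pos hr]
    simp
  calc Real.exp (σ + 0) ^ (μ⁻¹).re
      = Real.exp (φ θ).im * (Real.exp (σ + 0) ^ (μ⁻¹).re * Real.exp (-(φ θ).im)) := by
        rw [Real.exp_neg]
        field_simp
    _ ≤ Real.exp C * ‖Z (skewPolar (fun _ => 0) (σ, θ))‖ := by
        rw [hnorm]
        gcongr
        exact hφ θ

variable {E : Type*} [NormedAddCommGroup E] [NormedSpace ℂ E] [CompleteSpace E]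
  {Ω : Set (ℝ × ℝ)} {u : ℝ × ℝ → E}

lemma vectorField_eq_zero_iff_differentiableOn_uniformizer {A B : ℝ × ℝ → ℂ} {lam : ℂ}
    {M' R' : ℝ → ℝ}
    (hA : ∀ t : ℝ, 0 < t → ∀ z : ℝ × ℝ, A (t • z) = (t : ℂ) ^ lam * A z)
    (hB : ∀ t : ℝ, 0 < t → ∀ z : ℝ × ℝ, B (t • z) = (t : ℂ) ^ lam * B z)
    (hp : ∀ θ, angularCoeff A B θ ≠ 0) (hM : ∀ θ, HasDerivAt M (M' θ) θ)
    (hR : ∀ θ, HasDerivAt R (R' θ) θ) (hR' : Differentiable ℝ R')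
    (hqp : ∀ θ, radialCoeff A B θ / angularCoeff A B θ = R' θ + M' θ * I)
    (hΩ : IsOpen Ω) (hu : DifferentiableOn ℝ u (Ω \ {0})) :
    (∀ z ∈ Ω \ {0}, A z • fderiv ℝ u z (1, 0) + B z • fderiv ℝ u z (0, 1) = 0) ↔
      DifferentiableOn ℂ (u ∘ uniformizer M R) (uniformizer M R ⁻¹' Ω) := by
  have hΩ₀ : IsOpen (Ω \ {0}) := hΩ.sdiff isClosed_singleton
  have hmem : ∀ x ∈ skewPolar M ⁻¹' Ω, skewPolar M x ∈ Ω \ {0} := fun x hx =>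
    ⟨hx, skewPolar_ne_zero x⟩
  have hMd : Differentiable ℝ (skewPolar M) := fun x =>
    (hasFDerivAt_skewPolar (hM x.2)).differentiableAt
  have hpolar : (∀ z ∈ Ω \ {0}, A z • fderiv ℝ u z (1, 0) + B z • fderiv ℝ u z (0, 1) = 0) ↔
      ∀ x ∈ skewPolar M ⁻¹' Ω, A (skewPolar M x) • fderiv ℝ u (skewPolar M x) (1, 0) +
        B (skewPolar M x) • fderiv ℝ u (skewPolar M x) (0, 1) = 0 := by
    refine ⟨fun h x hx => h _ (hmem x hx), fun h z hz => ?_⟩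
    obtain ⟨x, rfl⟩ := exists_skewPolar_eq (M := M) hz.2
    exact h x hz.1
  rw [hpolar]
  refine Iff.trans (forall₂_congr fun x hx => ?_)
    (differentiableOn_comp_straighten_symm_iff hR hR' (hΩ.preimage hMd.continuous)
      (hu.comp hMd.differentiableOn hmem)).symm
  exact vectorField_eq_zero_iff_fderiv_skewPolar hA hB (hp x.2) (hM x.2) (hqp x.2)
    (hu.differentiableAt (hΩ₀.mem_nhds (hmem x hx)))

lemma differentiableOn_uniformizer_iff_exists_factor (hμ : 0 < μ.re) (hM : Continuous M)
    (hφ : Continuous φ) (hper : Periodic φ (2 * π))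
    (hRM : ∀ θ, (R θ + M θ * I : ℂ) = μ * (θ + φ θ)) (hZ₀ : Z 0 = 0)
    (hZ : ∀ r θ : ℝ, 0 < r → Z (r * Real.cos θ, r * Real.sin θ) =
      Complex.exp (Real.log r / μ) * Complex.exp (I * (θ + φ θ)))
    (hΩ : IsOpen Ω) (hu : ContinuousOn u Ω) :
    DifferentiableOn ℂ (u ∘ uniformizer M R) (uniformizer M R ⁻¹' Ω) ↔
      ∃ H : ℂ → E, DifferentiableOn ℂ H (Z '' Ω) ∧ ∀ z ∈ Ω, u z = H (Z z) := by
  have hμ₀ : μ ≠ 0 := fun h => by simp [h] at hμ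
  have hμinv : 0 < (μ⁻¹).re := by
    rw [inv_re]
    exact div_pos hμ (normSq_pos.mpr hμ₀)
  obtain ⟨C, hC⟩ := (hper.isBounded_of_continuous two_pi_pos.ne' hφ).exists_norm_le
  have hφC : ∀ θ, (φ θ).im ≤ C := fun θ => (im_le_norm _).trans (hC _ (mem_range_self θ))
  have hZP := firstIntegral_uniformizer hμ₀ hRM hZ
  have hderiv : ∀ ζ, HasStrictDerivAt (Z ∘ uniformizer M R) (Complex.exp (ζ / μ) * (1 / μ)) ζ := by
    intro ζ
    rw [show Z ∘ uniformizer M R = fun ζ => Complex.exp (ζ / μ) from funext hZP]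
    exact ((hasStrictDerivAt_id ζ).div_const μ).cexp
  have hderiv₀ : ∀ ζ, Complex.exp (ζ / μ) * (1 / μ) ≠ 0 := fun ζ =>
    mul_ne_zero (Complex.exp_ne_zero _) (one_div_ne_zero hμ₀)
  have hrange : ∀ z ≠ 0, z ∈ range (uniformizer M R) := fun z => mem_range_uniformizer
  have hopen : IsOpenMap Z := by
    refine isOpenMap_of_comp_of_comap_nhds_le (continuous_uniformizer hM) hrange hderiv hderiv₀
      (surjective_of_comp_eq_exp hμ₀ hZ₀ hZP) ?_
    rw [hZ₀]
    exact comap_nhds_zero_le_of_norm_le_rpow (inv_pos.mpr hμinv)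
      (norm_le_rpow_of_polar hμinv hφC hZ)
  exact differentiableOn_comp_iff_exists_factor (continuous_uniformizer hM) hrange hderiv hderiv₀
    (injective_of_comp_eq_exp hμ₀ hZ₀ hZP hrange (periodic_uniformizer hper hRM)) hopen hΩ hu

end Uniformizer

theorem stmt_4_general {E : Type*} [NormedAddCommGroup E] [NormedSpace ℂ E] [CompleteSpace E]
    (A B : ℝ × ℝ → ℂ) (lam : ℂ)
    (hA : DifferentiableOn ℝ A {z : ℝ × ℝ | z ≠ 0})
    (hB : DifferentiableOn ℝ B {z : ℝ × ℝ | z ≠ 0})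
    (hAh : ∀ t : ℝ, 0 < t → ∀ z : ℝ × ℝ, A (t • z) = (t : ℂ) ^ lam * A z)
    (hBh : ∀ t : ℝ, 0 < t → ∀ z : ℝ × ℝ, B (t • z) = (t : ℂ) ^ lam * B z)
    (a b p q : ℝ → ℂ)
    (ha : ∀ θ : ℝ, a θ = A (Real.cos θ, Real.sin θ))
    (hb : ∀ θ : ℝ, b θ = B (Real.cos θ, Real.sin θ))
    (hpdef : ∀ θ : ℝ, p θ = b θ * (Real.cos θ : ℂ) - a θ * (Real.sin θ : ℂ))
    (hqdef : ∀ θ : ℝ, q θ = Complex.I * (a θ * (Real.cos θ : ℂ) + b θ * (Real.sin θ : ℂ)))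
    (hC1 : interior {θ : ℝ | (q θ * (starRingEnd ℂ) (p θ)).re = 0} = ∅)
    (hC2 : ∀ θ : ℝ, p θ ≠ 0)
    (mu : ℂ)
    (hmudef : mu = (1 / (2 * Real.pi)) * ∫ θ in (0:ℝ)..(2 * Real.pi), q θ / p θ)
    (hmunorm : 0 ≤ mu.re)
    (hP : (∀ θ : ℝ, 0 ≤ (q θ * (starRingEnd ℂ) (p θ)).re) ∨
          (∀ θ : ℝ, (q θ * (starRingEnd ℂ) (p θ)).re ≤ 0))
    (phi : ℝ → ℂ)
    (hphiper : Function.Periodic phi (2 * Real.pi))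
    (hphider : ∀ θ : ℝ, HasDerivAt phi (q θ / (mu * p θ) - 1) θ)
    (Z : ℝ × ℝ → ℂ) (hZzero : Z 0 = 0)
    (hZ : ∀ r θ : ℝ, 0 < r → Z (r * Real.cos θ, r * Real.sin θ) =
      Complex.exp ((Real.log r : ℂ) / mu) * Complex.exp (Complex.I * ((θ : ℂ) + phi θ)))
    (Ω : Set (ℝ × ℝ)) (hΩ : IsOpen Ω)
    (u : ℝ × ℝ → E)
    (huc : ContinuousOn u Ω)
    (hu1 : DifferentiableOn ℝ u (Ω \ {0})) :
    (∀ z ∈ Ω \ {(0 : ℝ × ℝ)},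
        A z • fderiv ℝ u z (1, 0) + B z • fderiv ℝ u z (0, 1) = 0) ↔
    (∃ H : ℂ → E, DifferentiableOn ℂ H (Z '' Ω) ∧ ∀ z ∈ Ω, u z = H (Z z)) := by
  obtain rfl : p = angularCoeff A B := funext fun θ => by rw [hpdef, ha, hb, angularCoeff]
  obtain rfl : q = radialCoeff A B := funext fun θ => by rw [hqdef, ha, hb, radialCoeff]
  have hnormSq := fun θ => normSq_pos.mpr (hC2 θ)
  simp only [re_mul_conj_eq_normSq_smul_re_div, smul_eq_zero_iff_right (hnormSq _).ne',
    smul_nonneg_iff_nonneg_of_pos_left (hnormSq _),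
    smul_nonpos_iff_nonpos_of_pos_left (hnormSq _)] at hC1 hP
  have hf : Differentiable ℝ fun θ => radialCoeff A B θ / angularCoeff A B θ :=
    (differentiable_radialCoeff hA hB).div (differentiable_angularCoeff hA hB) hC2
  obtain ⟨hf₀, hmu⟩ := re_nonneg_and_re_average_pos hf.continuous hP hC1 hmudef hmunorm
  have hQ := fun θ => hasDerivAt_mul_id_add (fun h => hmu.ne' (by simp [h])) (hphider θ)
  have hphi : Continuous phi := continuous_iff_continuousAt.mpr fun θ => (hphider θ).continuousAt
  obtain ⟨R, hR⟩ := exists_orderIso_eq_re hmu hphi hphiper hQ hf.continuous hf₀ hC1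
  let M : ℝ → ℝ := fun θ => (mu * (θ + phi θ)).im
  have hR' : ∀ θ, HasDerivAt R (radialCoeff A B θ / angularCoeff A B θ).re θ := fun θ =>
    funext hR ▸ reCLM.hasFDerivAt.comp_hasDerivAt θ (hQ θ)
  have hM' : ∀ θ, HasDerivAt M (radialCoeff A B θ / angularCoeff A B θ).im θ := fun θ =>
    imCLM.hasFDerivAt.comp_hasDerivAt θ (hQ θ)
  have hM : Continuous M := continuous_iff_continuousAt.mpr fun θ => (hM' θ).continuousAt
  exact (vectorField_eq_zero_iff_differentiableOn_uniformizer hAh hBh hC2 hM' hR'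
    (reCLM.differentiable.comp hf) (fun θ => (re_add_im _).symm) hΩ hu1).trans
    (differentiableOn_uniformizer_iff_exists_factor hmu hM hphi hphiper
      (fun θ => by rw [hR, re_add_im]) hZzero hZ hΩ huc)

/-- Suppose L satisfies condition (P) on ℝ²∖{0} (so Re μ > 0 and Z_μ is a
homeomorphism).  Let Ω be open.  A function u, continuous on Ω and C¹ on Ω∖{0},
satisfies Lu = 0 pointwise on Ω∖{0} iff u = H ∘ Z_μ on Ω for some H holomorphic
on Z_μ(Ω). -/
theorem stmt_4
    (A B : ℝ × ℝ → ℂ) (lam : ℂ)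
    (hA : ContDiffOn ℝ (⊤ : ℕ∞) A {z : ℝ × ℝ | z ≠ 0})
    (hB : ContDiffOn ℝ (⊤ : ℕ∞) B {z : ℝ × ℝ | z ≠ 0})
    (hlam : 1 < lam.re)
    (hAh : ∀ t : ℝ, 0 < t → ∀ z : ℝ × ℝ, A (t • z) = (t : ℂ) ^ lam * A z)
    (hBh : ∀ t : ℝ, 0 < t → ∀ z : ℝ × ℝ, B (t • z) = (t : ℂ) ^ lam * B z)
    (a b p q : ℝ → ℂ)
    (ha : ∀ θ : ℝ, a θ = A (Real.cos θ, Real.sin θ))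
    (hb : ∀ θ : ℝ, b θ = B (Real.cos θ, Real.sin θ))
    (hpdef : ∀ θ : ℝ, p θ = b θ * (Real.cos θ : ℂ) - a θ * (Real.sin θ : ℂ))
    (hqdef : ∀ θ : ℝ, q θ = Complex.I * (a θ * (Real.cos θ : ℂ) + b θ * (Real.sin θ : ℂ)))
    (hC1 : interior {θ : ℝ | (q θ * (starRingEnd ℂ) (p θ)).re = 0} = ∅)
    (hC2 : ∀ θ : ℝ, p θ ≠ 0)
    (mu : ℂ)
    (hmudef : mu = (1 / (2 * Real.pi)) * ∫ θ in (0:ℝ)..(2 * Real.pi), q θ / p θ)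
    (hmunorm : 0 ≤ mu.re)
    (hP : (∀ θ : ℝ, 0 ≤ (q θ * (starRingEnd ℂ) (p θ)).re) ∨
          (∀ θ : ℝ, (q θ * (starRingEnd ℂ) (p θ)).re ≤ 0))
    (phi : ℝ → ℂ)
    (hphiper : Function.Periodic phi (2 * Real.pi))
    (hphider : ∀ θ : ℝ, HasDerivAt phi (q θ / (mu * p θ) - 1) θ)
    (hphimean : (∫ θ in (0:ℝ)..(2 * Real.pi), phi θ) = 0)
    (Z : ℝ × ℝ → ℂ) (hZzero : Z 0 = 0)
    (hZ : ∀ r θ : ℝ, 0 < r → Z (r * Real.cos θ, r * Real.sin θ) =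
      Complex.exp ((Real.log r : ℂ) / mu) * Complex.exp (Complex.I * ((θ : ℂ) + phi θ)))
    (Ω : Set (ℝ × ℝ)) (hΩ : IsOpen Ω)
    (u : ℝ × ℝ → ℂ)
    (huc : ContinuousOn u Ω)
    (hu1 : ContDiffOn ℝ 1 u (Ω \ {0})) :
    (∀ z ∈ Ω \ {(0 : ℝ × ℝ)},
        A z * fderiv ℝ u z (1, 0) + B z * fderiv ℝ u z (0, 1) = 0) ↔
    (∃ H : ℂ → ℂ, DifferentiableOn ℂ H (Z '' Ω) ∧ ∀ z ∈ Ω, u z = H (Z z)) :=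
  stmt_4_general A B lam (hA.differentiableOn (by simp)) (hB.differentiableOn (by simp)) hAh hBh a b
    p q ha hb hpdef hqdef hC1 hC2 mu hmudef hmunorm hP phi hphiper hphider Z hZzero hZ Ω hΩ u huc
    (hu1.differentiableOn one_ne_zero)
end
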